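/- Let ℓ ≥ 1, 1 ≤ i ≤ ℓ, and 0 ≤ s ≤ ℓ. Then p_{i|s} = [ℓ choose ℓ−s]₂^{−1} · Σ_{t = max{i−s,0}}^{min{ℓ−s, i−1}} [i−1 choose t]₂ · ∏_{j=0}^{ℓ−s−t−1} (2^ℓ − 2^{i+j})/(2^{ℓ−s} − 2^{t+j}). -/

import Mathlib

/-! The numerator of `p_{i|s}` counts the `(ℓ - s)`-dimensional `R` with `R ⊓ E_i ≤ E_{i-1}`. These are
sorted by the subspace `T = R ⊓ E_i` of `E_{i-1}`: there are `[i-1 choose t]₂` candidates `T` of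
dimension `t`, and the number of `R` with `R ⊓ E_i = T` depends only on `t`.

Both counts are instances of `card_ext`, which counts the `R` of dimension `dim T + k` with
`R ⊓ A = T` for given `T ≤ A`. It is a double count of pairs `(R, v)`, where `v` is a `k`-tuple
of vectors independent modulo `A` and `R = T ⊔ span v`. Counting such tuples (`card_tuples`) reduces to
Mathlib's `card_linearIndependent` in the quotient `V ⧸ A`. The sum over `T` is carried out in
`card_avoid`, for arbitrary subspaces `B ≤ A`. -/

open scoped Classical

noncomputable section

/-- `E_j`: the span of the first `j` standard basis vectors of `F₂^ℓ`. -/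
def Ej (ℓ j : ℕ) : Submodule (ZMod 2) (Fin ℓ → ZMod 2) :=
  Submodule.span (ZMod 2) {v | ∃ k : Fin ℓ, (k : ℕ) < j ∧ v = Pi.single k 1}

/-- The average conditional erasure probability `p_{i|s}` (with `i` 1-indexed): the fraction
of `(ℓ-s)`-dimensional subspaces `R` of `F₂^ℓ` with `R ∩ (E_i \ E_{i-1}) = ∅`. -/
def pis (ℓ i s : ℕ) : ℝ :=
  (Nat.card {R : Submodule (ZMod 2) (Fin ℓ → ZMod 2) //
      Module.finrank (ZMod 2) ↥R = ℓ - s ∧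
      (R : Set (Fin ℓ → ZMod 2)) ∩ ((Ej ℓ i : Set (Fin ℓ → ZMod 2)) \
        (Ej ℓ (i - 1) : Set (Fin ℓ → ZMod 2))) = ∅} : ℝ) /
  (Nat.card {R : Submodule (ZMod 2) (Fin ℓ → ZMod 2) //
      Module.finrank (ZMod 2) ↥R = ℓ - s} : ℝ)

/-- The 2-Gaussian binomial coefficient `[a choose t]₂`, as a real number. -/
def gaussBinom (a t : ℕ) : ℝ :=
  ∏ j ∈ Finset.range t, ((2 ^ a - 2 ^ j : ℝ) / (2 ^ t - 2 ^ j : ℝ))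

/-- The average erasure probability `F_i(z)` of the `i`-th bit-channel (`i` 1-indexed). -/
def Favg (ℓ i : ℕ) (z : ℝ) : ℝ :=
  ∑ s ∈ Finset.range (ℓ + 1), (Nat.choose ℓ s : ℝ) * z ^ s * (1 - z) ^ (ℓ - s) * pis ℓ i s

/-! ### Counting subspaces with prescribed intersection -/

section SubspaceCounting

variable {V : Type*} [AddCommGroup V] [Module (ZMod 2) V]

/-- Independence modulo `R ⊓ A`, for vectors of `R`, is independence modulo `A`, because
`R ⧸ (R ⊓ A)` embeds in `V ⧸ A`. -/
lemma linearIndependent_comap_iff (A R : Submodule (ZMod 2) V) {k : ℕ} (w : Fin k → R) :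
    LinearIndependent (ZMod 2) (fun x => (A.comap R.subtype).mkQ (w x)) ↔
      LinearIndependent (ZMod 2) (fun x => A.mkQ (w x : V)) := by
  have hker : LinearMap.ker (Submodule.mapQ (A.comap R.subtype) A R.subtype le_rfl) = ⊥ := by
    rw [Submodule.ker_mapQ, Submodule.mkQ_map_self]
  exact (LinearMap.linearIndependent_iff _ hker).symm

lemma finrank_comap_subtype_eq (A R : Submodule (ZMod 2) V) :
    Module.finrank (ZMod 2) (A.comap R.subtype) = Module.finrank (ZMod 2) ↥(R ⊓ A) := by
  rw [← Submodule.map_comap_subtype, Submodule.finrank_map_subtype_eq]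

variable [Finite V]

/-- A bijection of sets `V ≃ (V ⧸ A) × A`, obtained from the section `Quotient.out` of the quotient
map. It is not linear, but its first component is `A.mkQ`. -/
def splitEquiv (A : Submodule (ZMod 2) V) : V ≃ (V ⧸ A) × A where
  toFun v := (A.mkQ v, ⟨v - Quotient.out (A.mkQ v), by
    refine (Submodule.Quotient.eq A).1 ?_
    exact (Quotient.out_eq (A.mkQ v)).symm⟩)
  invFun p := Quotient.out p.1 + p.2
  left_inv v := by simp
  right_inv p := by
    obtain ⟨q, a, ha⟩ := p
    have h : A.mkQ (Quotient.out q + a) = q := by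
      rw [map_add, (by simpa using ha : A.mkQ a = 0), add_zero]
      exact Quotient.out_eq q
    ext
    · exact h
    · simp only [h]; simp

/-- The number of `k`-tuples in `V` that are linearly independent modulo `A`: such a tuple is an
independent tuple of `V ⧸ A` together with an arbitrary choice of representatives. -/
lemma card_tuples (A : Submodule (ZMod 2) V) (k : ℕ)
    (hk : Module.finrank (ZMod 2) A + k ≤ Module.finrank (ZMod 2) V) :
    (Nat.card {v : Fin k → V // LinearIndependent (ZMod 2) (fun x => A.mkQ (v x))} : ℝ) =
      ∏ j ∈ Finset.range k, ((2 : ℝ) ^ Module.finrank (ZMod 2) V -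
        2 ^ (Module.finrank (ZMod 2) A + j)) := by
  have : Finite (V ⧸ A) := Finite.of_surjective _ A.mkQ_surjective
  have e : {v : Fin k → V // LinearIndependent (ZMod 2) (fun x => A.mkQ (v x))} ≃
      {w : Fin k → V ⧸ A // LinearIndependent (ZMod 2) w} × (Fin k → A) :=
    (Equiv.subtypeEquiv (q := fun p : (Fin k → V ⧸ A) × (Fin k → A) =>
        LinearIndependent (ZMod 2) p.1)
      ((Equiv.arrowCongr (Equiv.refl _) (splitEquiv A)).trans
        (Equiv.arrowProdEquivProdArrow _ _ _)) (fun v => Iff.rfl)).trans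
      (Equiv.prodSubtypeFstEquivSubtypeProd
        (p := fun w : Fin k → V ⧸ A => LinearIndependent (ZMod 2) w))
  have hq := A.finrank_quotient_add_finrank
  have hA : Nat.card A = 2 ^ Module.finrank (ZMod 2) A := by
    rw [Module.natCard_eq_pow_finrank (K := ZMod 2), Nat.card_zmod]
  rw [Nat.card_congr e, Nat.card_prod, card_linearIndependent (by omega), Nat.card_fun, hA,
    Nat.card_fin, Nat.cast_mul, Nat.cast_prod, Finset.prod_range, Nat.cast_pow, Nat.cast_pow,
    ← Fin.prod_const k (((2 : ℕ) : ℝ) ^ Module.finrank (ZMod 2) A), ← Finset.prod_mul_distrib]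
  refine Finset.prod_congr rfl fun j _ => ?_
  rw [ZMod.card, Nat.cast_sub (Nat.pow_le_pow_right (by norm_num) (by omega)), ← hq]
  push_cast
  ring

/-- If `T ≤ A` and `v` is a `k`-tuple independent modulo `A`, then `T ⊔ span v` has dimension
`dim T + k`, and by modularity it meets `A` exactly in `T`. -/
lemma finrank_and_inf_of_tuple (A T : Submodule (ZMod 2) V) (hT : T ≤ A) {k : ℕ}
    {v : Fin k → V} (hv : LinearIndependent (ZMod 2) (fun x => A.mkQ (v x))) :
    Module.finrank (ZMod 2) ↥(T ⊔ Submodule.span (ZMod 2) (Set.range v)) =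
      Module.finrank (ZMod 2) T + k ∧ (T ⊔ Submodule.span (ZMod 2) (Set.range v)) ⊓ A = T := by
  have hd : Disjoint (Submodule.span (ZMod 2) (Set.range v)) A := by
    simpa using Submodule.range_ker_disjoint (f := A.mkQ) (v := v) hv
  have hv' : LinearIndependent (ZMod 2) v := LinearIndependent.of_comp A.mkQ hv
  constructor
  · have h := Submodule.finrank_sup_add_finrank_inf_eq T (Submodule.span (ZMod 2) (Set.range v))
    rw [(hd.symm.mono_left hT).eq_bot, finrank_bot, finrank_span_eq_card hv',
      Fintype.card_fin] at h
    exact h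
  · rw [sup_inf_assoc_of_le _ hT, hd.eq_bot, sup_bot_eq]

lemma sup_span_eq_iff (A T R : Submodule (ZMod 2) V) (hT : T ≤ A) (k : ℕ)
    (hRA : R ⊓ A = T)
    (hR : Module.finrank (ZMod 2) R = Module.finrank (ZMod 2) T + k)
    (v : Fin k → V) (hv : LinearIndependent (ZMod 2) (fun x => A.mkQ (v x))) :
    T ⊔ Submodule.span (ZMod 2) (Set.range v) = R ↔ ∀ x, v x ∈ R := by
  constructor
  · rintro rfl x
    exact Submodule.mem_sup_right (Submodule.subset_span ⟨x, rfl⟩)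
  · intro hvR
    refine Submodule.eq_of_le_of_finrank_eq (sup_le (hRA ▸ inf_le_left) ?_)
      ((finrank_and_inf_of_tuple A T hT hv).1.trans hR.symm)
    rw [Submodule.span_le]
    rintro _ ⟨x, rfl⟩
    exact hvR x

/-- The number of `R` of dimension `dim T + k` with `R ⊓ A = T`. Sending a `k`-tuple `v` independent
modulo `A` to `T ⊔ span v` hits every such `R`, and the fibre over `R` consists of the `k`-tuples of
`R` independent modulo `R ⊓ A = T`; both kinds of tuples are counted by `card_tuples`. -/
lemma card_ext (A T : Submodule (ZMod 2) V) (hT : T ≤ A) (k : ℕ)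
    (hk : Module.finrank (ZMod 2) A + k ≤ Module.finrank (ZMod 2) V) :
    (Nat.card {R : Submodule (ZMod 2) V //
        Module.finrank (ZMod 2) R = Module.finrank (ZMod 2) T + k ∧ R ⊓ A = T} : ℝ) =
      ∏ j ∈ Finset.range k, (((2 : ℝ) ^ Module.finrank (ZMod 2) V -
        2 ^ (Module.finrank (ZMod 2) A + j)) /
        (2 ^ (Module.finrank (ZMod 2) T + k) - 2 ^ (Module.finrank (ZMod 2) T + j))) := by
  set S := {R : Submodule (ZMod 2) V //
        Module.finrank (ZMod 2) R = Module.finrank (ZMod 2) T + k ∧ R ⊓ A = T} with hS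
  let f : {v : Fin k → V // LinearIndependent (ZMod 2) (fun x => A.mkQ (v x))} → S :=
    fun v => ⟨T ⊔ Submodule.span (ZMod 2) (Set.range v.1), finrank_and_inf_of_tuple A T hT v.2⟩
  have e (R : S) : {v // f v = R} ≃ {w : Fin k → R.1 //
      LinearIndependent (ZMod 2) (fun x => (A.comap R.1.subtype).mkQ (w x))} :=
    { toFun := fun v => ⟨fun x => ⟨v.1.1 x, (sup_span_eq_iff A T R.1 hT k R.2.2 R.2.1 v.1.1 v.1.2).1
          (congrArg Subtype.val v.2) x⟩, (linearIndependent_comap_iff A R.1 _).2 v.1.2⟩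
      invFun := fun w => ⟨⟨fun x => w.1 x, (linearIndependent_comap_iff A R.1 _).1 w.2⟩,
        Subtype.ext ((sup_span_eq_iff A T R.1 hT k R.2.2 R.2.1 _
          ((linearIndependent_comap_iff A R.1 _).1 w.2)).2 fun x => (w.1 x).2)⟩
      left_inv := fun v => rfl
      right_inv := fun w => rfl }
  have hfib (R : S) : (Nat.card {v // f v = R} : ℝ) = ∏ j ∈ Finset.range k,
      ((2 : ℝ) ^ (Module.finrank (ZMod 2) T + k) - 2 ^ (Module.finrank (ZMod 2) T + j)) := by
    have hc := finrank_comap_subtype_eq A R.1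
    rw [R.2.2] at hc
    rw [Nat.card_congr (e R), card_tuples _ _ (by rw [hc, R.2.1]), hc, R.2.1]
  have : Fintype S := Fintype.ofFinite _
  have htot := card_tuples A k hk
  rw [← Nat.card_congr (Equiv.sigmaFiberEquiv f), Nat.card_sigma, Nat.cast_sum,
    Finset.sum_congr rfl fun R _ => hfib R, Finset.sum_const, nsmul_eq_mul,
    Finset.card_univ, ← Nat.card_eq_fintype_card] at htot
  rw [Finset.prod_div_distrib, ← htot, mul_div_cancel_right₀]
  refine Finset.prod_ne_zero_iff.2 fun j hj => sub_ne_zero.2 (ne_of_gt ?_)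
  have := Finset.mem_range.1 hj
  exact pow_lt_pow_right₀ (by norm_num) (by omega)

/-- `gaussBinom` counts subspaces: the case `A = T = ⊥` of `card_ext`. -/
lemma card_gauss (t : ℕ) (ht : t ≤ Module.finrank (ZMod 2) V) :
    (Nat.card {R : Submodule (ZMod 2) V // Module.finrank (ZMod 2) R = t} : ℝ) =
      gaussBinom (Module.finrank (ZMod 2) V) t := by
  simpa [gaussBinom] using card_ext (⊥ : Submodule (ZMod 2) V) ⊥ le_rfl t (by simpa using ht)

lemma card_gauss_le (A : Submodule (ZMod 2) V) (t : ℕ) (ht : t ≤ Module.finrank (ZMod 2) A) :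
    (Nat.card {T : Submodule (ZMod 2) V // T ≤ A ∧ Module.finrank (ZMod 2) T = t} : ℝ) =
      gaussBinom (Module.finrank (ZMod 2) A) t := by
  rw [← card_gauss t ht]
  congr 1
  refine (Nat.card_congr (Equiv.trans ?_ (Equiv.subtypeSubtypeEquivSubtypeInter
    (fun T : Submodule (ZMod 2) V => T ≤ A) fun T => Module.finrank (ZMod 2) T = t))).symm
  exact Equiv.subtypeEquiv (Submodule.MapSubtype.orderIso A).toEquiv fun R => by
    change _ ↔ Module.finrank (ZMod 2) (R.map A.subtype) = t
    rw [Submodule.finrank_map_subtype_eq]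

/-- The number of `r`-dimensional `R` that avoid `A \ B`, where `B ≤ A`. Avoiding
`A \ B` means `R ⊓ A ≤ B`, and the subspaces are sorted by `T = R ⊓ A` and then by `t = dim T`.
The lower bound for `t` comes from `dim (R ⊔ A) ≤ dim V`. -/
lemma card_avoid (A B : Submodule (ZMod 2) V) (hBA : B ≤ A) (r : ℕ) :
    (Nat.card {R : Submodule (ZMod 2) V // Module.finrank (ZMod 2) R = r ∧
      (R : Set V) ∩ ((A : Set V) \ (B : Set V)) = ∅} : ℝ) =
      ∑ t ∈ Finset.Icc (Module.finrank (ZMod 2) A + r - Module.finrank (ZMod 2) V)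
          (min r (Module.finrank (ZMod 2) B)),
        gaussBinom (Module.finrank (ZMod 2) B) t * ∏ j ∈ Finset.range (r - t),
          (((2 : ℝ) ^ Module.finrank (ZMod 2) V - 2 ^ (Module.finrank (ZMod 2) A + j)) /
            (2 ^ r - 2 ^ (t + j))) := by
  have : Fintype (Submodule (ZMod 2) V) := Fintype.ofFinite _
  have hcond (R : Submodule (ZMod 2) V) :
      (R : Set V) ∩ ((A : Set V) \ (B : Set V)) = ∅ ↔ R ⊓ A ≤ B := by
    rw [← Set.inter_sdiff_assoc, Set.sdiff_eq_empty]
    rfl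
  simp_rw [hcond]
  rw [Nat.card_eq_fintype_card, Fintype.card_subtype,
    Finset.card_eq_sum_card_fiberwise (f := fun R => R ⊓ A)
      (t := Finset.univ.filter fun T : Submodule (ZMod 2) V => T ≤ B ∧
        Module.finrank (ZMod 2) T ∈ Finset.Icc
          (Module.finrank (ZMod 2) A + r - Module.finrank (ZMod 2) V)
          (min r (Module.finrank (ZMod 2) B)))]
  swap
  · intro R hR
    simp only [Finset.coe_filter, Finset.mem_univ, true_and, Set.mem_ofPred_eq] at hR ⊢
    obtain ⟨hR, hRB⟩ := hR
    have h1 := Submodule.finrank_sup_add_finrank_inf_eq R A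
    have h2 := Submodule.finrank_le (R ⊔ A)
    have h3 := Submodule.finrank_mono hRB
    have h4 := Submodule.finrank_mono (inf_le_left : R ⊓ A ≤ R)
    refine ⟨hRB, ?_⟩
    rw [Finset.mem_Icc, le_min_iff]
    omega
  have hmem {t : ℕ} (ht : t ∈ Finset.Icc
      (Module.finrank (ZMod 2) A + r - Module.finrank (ZMod 2) V)
      (min r (Module.finrank (ZMod 2) B))) : Module.finrank (ZMod 2) A + (r - t) ≤
        Module.finrank (ZMod 2) V ∧ t ≤ r ∧ t ≤ Module.finrank (ZMod 2) B := by
    rw [Finset.mem_Icc, le_min_iff] at ht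
    have := Submodule.finrank_le A
    omega
  rw [Nat.cast_sum, Finset.sum_congr rfl (g := fun T : Submodule (ZMod 2) V =>
    ∏ j ∈ Finset.range (r - Module.finrank (ZMod 2) T),
          (((2 : ℝ) ^ Module.finrank (ZMod 2) V - 2 ^ (Module.finrank (ZMod 2) A + j)) /
            (2 ^ r - 2 ^ (Module.finrank (ZMod 2) T + j))))]
  swap
  · intro T hT
    simp only [Finset.mem_filter, Finset.mem_univ, true_and] at hT
    obtain ⟨h1, h2, -⟩ := hmem hT.2
    have h := card_ext A T (hT.1.trans hBA) _ h1
    rw [Nat.add_sub_cancel' h2] at h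
    rw [← h, Nat.card_eq_fintype_card, Fintype.card_subtype, Finset.filter_filter]
    congr 2
    ext R
    simp only [Finset.mem_filter, Finset.mem_univ, true_and]
    constructor
    · rintro ⟨⟨ha, -⟩, hc⟩
      exact ⟨ha, hc⟩
    · rintro ⟨ha, hc⟩
      exact ⟨⟨ha, hc ▸ hT.1⟩, hc⟩
  rw [← Finset.sum_fiberwise_of_maps_to (g := fun T : Submodule (ZMod 2) V =>
    Module.finrank (ZMod 2) T) (fun T hT => (Finset.mem_filter.1 hT).2.2)]
  refine Finset.sum_congr rfl fun t ht => ?_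
  rw [← card_gauss_le B t (hmem ht).2.2, Nat.card_eq_fintype_card, Fintype.card_subtype,
    ← nsmul_eq_mul, ← Finset.sum_const, Finset.filter_filter]
  refine Finset.sum_congr ?_ ?_
  · ext T
    simp only [Finset.mem_filter, Finset.mem_univ, true_and]
    constructor
    · rintro ⟨⟨ha, -⟩, hc⟩
      exact ⟨ha, hc⟩
    · rintro ⟨ha, hc⟩
      exact ⟨⟨ha, hc ▸ ht⟩, hc⟩
  · intro T hT
    rw [(Finset.mem_filter.1 hT).2.2]

end SubspaceCounting

/-! ### The coordinate flag -/

lemma finrank_Ej {ℓ j : ℕ} (hj : j ≤ ℓ) : Module.finrank (ZMod 2) (Ej ℓ j) = j := by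
  have hset : {v : Fin ℓ → ZMod 2 | ∃ k : Fin ℓ, (k : ℕ) < j ∧ v = Pi.single k 1} =
      Set.range (fun x : Fin j => (Pi.single (Fin.castLE hj x) 1 : Fin ℓ → ZMod 2)) := by
    ext v
    constructor
    · rintro ⟨k, hk, rfl⟩
      exact ⟨⟨k, hk⟩, rfl⟩
    · rintro ⟨x, rfl⟩
      exact ⟨Fin.castLE hj x, x.2, rfl⟩
  have hli := (Pi.basisFun (ZMod 2) (Fin ℓ)).linearIndependent.comp _ (Fin.castLE_injective hj)
  have hfun : Pi.basisFun (ZMod 2) (Fin ℓ) ∘ Fin.castLE hj =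
      fun x : Fin j => (Pi.single (Fin.castLE hj x) 1 : Fin ℓ → ZMod 2) :=
    funext fun x => Pi.basisFun_apply _ _ _
  rw [Ej, hset, ← hfun, finrank_span_eq_card hli, Fintype.card_fin]

lemma Ej_mono (ℓ : ℕ) {j k : ℕ} (h : j ≤ k) : Ej ℓ j ≤ Ej ℓ k :=
  Submodule.span_mono fun _ ⟨x, hx, hv⟩ => ⟨x, hx.trans_le h, hv⟩

theorem stmt11 (ℓ i s : ℕ) (hℓ : 1 ≤ ℓ) (hi : 1 ≤ i) (hiℓ : i ≤ ℓ) (hs : s ≤ ℓ) :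
    pis ℓ i s =
      (gaussBinom ℓ (ℓ - s))⁻¹ *
        ∑ t ∈ Finset.Icc (i - s) (min (ℓ - s) (i - 1)),
          gaussBinom (i - 1) t *
            ∏ j ∈ Finset.range (ℓ - s - t),
              ((2 ^ ℓ - 2 ^ (i + j) : ℝ) / (2 ^ (ℓ - s) - 2 ^ (t + j) : ℝ)) := by
  have hV : Module.finrank (ZMod 2) (Fin ℓ → ZMod 2) = ℓ := by simp
  have hA := finrank_Ej hiℓ
  have hB := finrank_Ej ((Nat.sub_le i 1).trans hiℓ)
  have hnum := card_avoid (Ej ℓ i) (Ej ℓ (i - 1)) (Ej_mono ℓ (Nat.sub_le i 1)) (ℓ - s)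
  have hden := card_gauss (V := Fin ℓ → ZMod 2) (ℓ - s) (by omega)
  rw [hV] at hden
  rw [hV, hA, hB, show i + (ℓ - s) - ℓ = i - s by omega] at hnum
  rw [pis, hden, ← hnum, div_eq_inv_mul]

end
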